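/- arXiv:1510.02033 — 2 statements merged into one kernel-verified Lean document; each statement's English description precedes it below -/
import Mathlib

section
/- Let q₀ : ℝ → ℂ, let c ∈ ℝ and let j ∈ ℕ. Suppose that q₀ is (j+1)-times continuously differentiable on (−∞, c) and on (c, ∞); that for every m with 0 ≤ m ≤ j+1 the restriction of the m-th derivative q₀⁽ᵐ⁾ to each of (−∞, c) and (c, ∞) is integrable; that for every m with 0 ≤ m ≤ j the one-sided limits q₀⁽ᵐ⁾(c⁻) and q₀⁽ᵐ⁾(c⁺) exist and q₀⁽ᵐ⁾(x) → 0 as x → ±∞; and that q₀⁽ᵐ⁾(c⁻) = q₀⁽ᵐ⁾(c⁺) for every m with 0 ≤ m ≤ j−1. Then for every real k ≠ 0, the Fourier transform satisfies q̂₀(k) = e^{−ikc}·[q₀⁽ʲ⁾(c)]/(ik)^{j+1} + F(k)/(ik)^{j+1}, where [q₀⁽ʲ⁾(c)] = q₀⁽ʲ⁾(c⁺) − q₀⁽ʲ⁾(c⁻) and F(k) = ∫_{−∞}^{c} e^{−ikx} q₀⁽ʲ⁺¹⁾(x) dx + ∫_{c}^{∞} e^{−ikx} q₀⁽ʲ⁺¹⁾(x)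 dx. -/
open MeasureTheory Complex Set Filter Topology

theorem norm_exp_neg_I_mul_mul (k x : ℝ) :
    ‖Complex.exp (-Complex.I * k * x)‖ = 1 := by
  rw [show -Complex.I * k * x = ((-(k * x) : ℝ) : ℂ) * Complex.I by push_cast; ring]
  exact Complex.norm_exp_ofReal_mul_I _

theorem hasDerivAt_exp_neg_I_mul_mul (k x : ℝ) :
    HasDerivAt (fun y : ℝ => Complex.exp (-Complex.I * k * y))
      (-Complex.I * k * Complex.exp (-Complex.I * k * x)) x := by
  have h := ((Complex.ofRealCLM.hasDerivAt (x := x)).const_mul (-Complex.I * (k : ℂ))).cexp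
  simpa [mul_comm] using h

theorem MeasureTheory.IntegrableOn.exp_neg_I_mul_mul {f : ℝ → ℂ} {s : Set ℝ}
    (hf : IntegrableOn f s) (k : ℝ) :
    IntegrableOn (fun x : ℝ => Complex.exp (-Complex.I * k * x) * f x) s :=
  Integrable.bdd_mul hf (c := 1) (by fun_prop)
    (Eventually.of_forall fun x => (norm_exp_neg_I_mul_mul k x).le)

theorem Filter.Tendsto.exp_neg_I_mul_mul_zero {f : ℝ → ℂ} {l : Filter ℝ}
    (hf : Tendsto f l (𝓝 0)) (k : ℝ) :
    Tendsto (fun x : ℝ => Complex.exp (-Complex.I * k * x) * f x) l (𝓝 0) := by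
  rw [tendsto_zero_iff_norm_tendsto_zero] at hf ⊢
  simpa only [norm_mul, norm_exp_neg_I_mul_mul, one_mul] using hf

theorem Filter.Tendsto.exp_neg_I_mul_mul_nhdsWithin {f : ℝ → ℂ} {c : ℝ} {s : Set ℝ} {L : ℂ}
    (hf : Tendsto f (𝓝[s] c) (𝓝 L)) (k : ℝ) :
    Tendsto (fun x : ℝ => Complex.exp (-Complex.I * k * x) * f x) (𝓝[s] c)
      (𝓝 (Complex.exp (-Complex.I * k * c) * L)) :=
  (hasDerivAt_exp_neg_I_mul_mul k c).continuousAt.continuousWithinAt.tendsto.mul hf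

/-- Fourier integral of a derivative over a right half-line. -/
theorem integral_Ioi_exp_mul_deriv {f f' : ℝ → ℂ} {c : ℝ} {L : ℂ} (k : ℝ)
    (hderiv : ∀ x ∈ Ioi c, HasDerivAt f (f' x) x)
    (hf : IntegrableOn f (Ioi c)) (hf' : IntegrableOn f' (Ioi c))
    (hlim : Tendsto f (𝓝[>] c) (𝓝 L)) (hdecay : Tendsto f atTop (𝓝 0)) :
    ∫ x in Ioi c, Complex.exp (-Complex.I * k * x) * f' x
      = Complex.I * k * (∫ x in Ioi c, Complex.exp (-Complex.I * k * x) * f x)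
        - Complex.exp (-Complex.I * k * c) * L := by
  have hu'v : IntegrableOn
      (fun x : ℝ => -Complex.I * k * Complex.exp (-Complex.I * k * x) * f x) (Ioi c) := by
    simpa only [IntegrableOn, mul_assoc] using (hf.exp_neg_I_mul_mul k).const_mul (-Complex.I * (k : ℂ))
  rw [integral_Ioi_mul_deriv_eq_deriv_mul (fun x _ => hasDerivAt_exp_neg_I_mul_mul k x) hderiv
    (hf'.exp_neg_I_mul_mul k) hu'v (hlim.exp_neg_I_mul_mul_nhdsWithin k)
    (hdecay.exp_neg_I_mul_mul_zero k)]
  simp only [mul_assoc (-Complex.I * (k : ℂ)) (Complex.exp _), integral_const_mul]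
  ring

/-- Fourier integral of a derivative over a left half-line. -/
theorem integral_Iio_exp_mul_deriv {f f' : ℝ → ℂ} {c : ℝ} {L : ℂ} (k : ℝ)
    (hderiv : ∀ x ∈ Iio c, HasDerivAt f (f' x) x)
    (hf : IntegrableOn f (Iio c)) (hf' : IntegrableOn f' (Iio c))
    (hlim : Tendsto f (𝓝[<] c) (𝓝 L)) (hdecay : Tendsto f atBot (𝓝 0)) :
    ∫ x in Iio c, Complex.exp (-Complex.I * k * x) * f' x
      = Complex.I * k * (∫ x in Iio c, Complex.exp (-Complex.I * k * x) * f x)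
        + Complex.exp (-Complex.I * k * c) * L := by
  rw [← integrableOn_Iic_iff_integrableOn_Iio] at hf hf'
  have hu'v : IntegrableOn
      (fun x : ℝ => -Complex.I * k * Complex.exp (-Complex.I * k * x) * f x) (Iic c) := by
    simpa only [IntegrableOn, mul_assoc] using (hf.exp_neg_I_mul_mul k).const_mul (-Complex.I * (k : ℂ))
  rw [← integral_Iic_eq_integral_Iio, ← integral_Iic_eq_integral_Iio,
    integral_Iic_mul_deriv_eq_deriv_mul (fun x _ => hasDerivAt_exp_neg_I_mul_mul k x) hderiv
    (hf'.exp_neg_I_mul_mul k) hu'v (hlim.exp_neg_I_mul_mul_nhdsWithin k)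
    (hdecay.exp_neg_I_mul_mul_zero k)]
  simp only [mul_assoc (-Complex.I * (k : ℂ)) (Complex.exp _), integral_const_mul]
  ring

/-- Integration by parts formula for the Fourier transform of a function
whose `j`-th derivative has a jump discontinuity at `x = c`.
Here `d m` denotes the `m`-th derivative of `q₀` (with `d 0 = q₀`), `Lm m` and `Lp m`
denote the one-sided limits `q₀⁽ᵐ⁾(c⁻)` and `q₀⁽ᵐ⁾(c⁺)` respectively. -/
theorem fourier_transform_jump_decomposition
    (q₀ : ℝ → ℂ) (c : ℝ) (j : ℕ)
    (d : ℕ → ℝ → ℂ) (Lm Lp : ℕ → ℂ)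
    (hd0 : d 0 = q₀)
    -- q₀ is (j+1)-times differentiable on (−∞,c) and (c,∞),
    -- with m-th derivative d m:
    (hderiv : ∀ m ≤ j, ∀ x ∈ Iio c ∪ Ioi c, HasDerivAt (d m) (d (m + 1) x) x)
    -- all derivatives up to order j+1 are continuous on (−∞,c) and (c,∞):
    (hcont : ∀ m ≤ j + 1, ContinuousOn (d m) (Iio c) ∧ ContinuousOn (d m) (Ioi c))
    -- all derivatives up to order j+1 are integrable on (−∞,c) and (c,∞):
    (hint : ∀ m ≤ j + 1, IntegrableOn (d m) (Iio c) ∧ IntegrableOn (d m) (Ioi c))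
    -- one-sided limits at c exist for derivatives up to order j:
    (hlimL : ∀ m ≤ j, Tendsto (d m) (nhdsWithin c (Iio c)) (nhds (Lm m)))
    (hlimR : ∀ m ≤ j, Tendsto (d m) (nhdsWithin c (Ioi c)) (nhds (Lp m)))
    -- derivatives up to order j vanish at ±∞:
    (hdecay : ∀ m ≤ j, Tendsto (d m) atTop (nhds 0) ∧ Tendsto (d m) atBot (nhds 0))
    -- continuity across c of the derivatives of order ≤ j−1:
    (hmatch : ∀ m, m + 1 ≤ j → Lm m = Lp m) :
    ∀ k : ℝ, k ≠ 0 →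
      (∫ x : ℝ, Complex.exp (-Complex.I * k * x) * q₀ x)
        = Complex.exp (-Complex.I * k * c) * (Lp j - Lm j) / (Complex.I * k) ^ (j + 1)
          + ((∫ x in Iio c, Complex.exp (-Complex.I * k * x) * d (j + 1) x)
              + ∫ x in Ioi c, Complex.exp (-Complex.I * k * x) * d (j + 1) x)
            / (Complex.I * k) ^ (j + 1) := by
  intro k hk
  have hik : Complex.I * (k : ℂ) ≠ 0 := mul_ne_zero Complex.I_ne_zero (by exact_mod_cast hk)
  set S : ℕ → ℂ := fun m => (∫ x in Iio c, Complex.exp (-Complex.I * k * x) * d m x)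
    + ∫ x in Ioi c, Complex.exp (-Complex.I * k * x) * d m x with hS
  have hstep : ∀ m ≤ j, S (m + 1)
      = Complex.I * k * S m - Complex.exp (-Complex.I * k * c) * (Lp m - Lm m) := by
    intro m hm
    have hL := integral_Iio_exp_mul_deriv k (fun x hx => hderiv m hm x (Or.inl hx))
      (hint m (by omega)).1 (hint (m + 1) (by omega)).1 (hlimL m hm) (hdecay m hm).2
    have hR := integral_Ioi_exp_mul_deriv k (fun x hx => hderiv m hm x (Or.inr hx))
      (hint m (by omega)).2 (hint (m + 1) (by omega)).2 (hlimR m hm) (hdecay m hm).1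
    simp only [hS, hL, hR]
    ring
  have hpow : ∀ n ≤ j, S n = (Complex.I * k) ^ n * S 0 := by
    intro n
    induction n with
    | zero => simp
    | succ n ih =>
      intro hn
      rw [hstep n (by omega), ih (by omega), hmatch n hn]
      ring
  have hzero : (∫ x : ℝ, Complex.exp (-Complex.I * k * x) * q₀ x) = S 0 := by
    have hL := ((hint 0 (by omega)).1.exp_neg_I_mul_mul k)
    have hR := ((hint 0 (by omega)).2.exp_neg_I_mul_mul k)
    rw [← integrableOn_Iic_iff_integrableOn_Iio] at hL
    simp only [hS, ← hd0]
    rw [← integral_Iic_eq_integral_Iio, intervalIntegral.integral_Iic_add_Ioi hL hR]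
  change _ = _ + S (j + 1) / _
  rw [hzero, hstep j le_rfl, hpow j le_rfl]
  field_simp
  ring
end

section
/- Let h : ℝ → ℂ be integrable and of bounded variation on ℝ, and let t ∈ ℝ be a point at which the one-sided limits h(t⁺) and h(t⁻) exist. Define ĥ(s) = ∫_ℝ e^{−isτ} h(τ) dτ. Then the symmetric (principal-value) Fourier inversion integral converges to the average of the one-sided limits: lim_{R→∞} (1/2π) ∫_{−R}^{R} e^{ist} ĥ(s) ds = (h(t⁺) + h(t⁻))/2. -/
open MeasureTheory Complex Set Filter Topology

/-- A second-mean-value bound: integrating a function of bounded variation, normalized to vanish at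
the right endpoint, against a continuous function whose primitive is bounded by `M`. -/
theorem norm_integral_sub_right_mul_le_eVariationOn {g : ℝ → ℂ} {φ : ℝ → ℝ} {a b M : ℝ}
    (hab : a ≤ b) (hg : BoundedVariationOn g (Icc a b)) (hgi : IntervalIntegrable g volume a b)
    (hφ : Continuous φ) (hM : ∀ x ∈ Icc a b, |∫ u in a..x, φ u| ≤ M) :
    ‖∫ u in a..b, (g u - g b) * φ u‖ ≤ M * (eVariationOn g (Icc a b)).toReal := by
  have haI : a ∈ Icc a b := left_mem_Icc.2 hab
  have hbI : b ∈ Icc a b := right_mem_Icc.2 hab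
  have hloc := hg.locallyBoundedVariationOn
  set V : ℝ → ℝ := variationOnFromTo g (Icc a b) a with hV
  have hVmono : MonotoneOn V (Icc a b) := variationOnFromTo.monotoneOn hloc haI
  have hgV : ∀ x ∈ Icc a b, ∀ y ∈ Icc a b, x ≤ y → ‖g y - g x‖ ≤ V y - V x := by
    intro x hx y hy hxy
    have h1 : V y - V x = variationOnFromTo g (Icc a b) x y := by
      rw [hV, ← variationOnFromTo.add hloc haI hx hy, add_sub_cancel_left]
    rw [h1, variationOnFromTo.eq_of_le _ _ hxy, ← dist_eq_norm, dist_comm, dist_edist]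
    exact ENNReal.toReal_mono (hloc x y hx hy)
      (eVariationOn.edist_le g ⟨hx, le_rfl, hxy⟩ ⟨hy, hxy, le_rfl⟩)
  have hVb : V b - V a = (eVariationOn g (Icc a b)).toReal := by
    rw [hV, variationOnFromTo.self, sub_zero, variationOnFromTo.eq_of_le _ _ hab, inter_self]
  obtain ⟨C, hC⟩ := isCompact_Icc.exists_bound_of_continuousOn (s := Icc a b) hφ.continuousOn
  have hC0 : 0 ≤ C := (norm_nonneg _).trans (hC a haI)
  have hM0 : 0 ≤ M := (abs_nonneg _).trans (hM a haI)
  have hφc : Continuous fun u => (φ u : ℂ) := continuous_ofReal.comp hφ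
  have hsub : ∀ x ∈ Icc a b, ∀ y ∈ Icc a b, x ≤ y → IntervalIntegrable g volume x y := by
    intro x hx y hy hxy
    apply hgi.mono_set
    rw [uIcc_of_le hxy, uIcc_of_le hab]
    exact Icc_subset_Icc hx.1 hy.2
  have hgφ : ∀ x ∈ Icc a b, ∀ y ∈ Icc a b, x ≤ y →
      IntervalIntegrable (fun u => g u * φ u) volume x y := fun x hx y hy hxy =>
    (hsub x hx y hy hxy).mul_continuousOn hφc.continuousOn
  set P : ℝ → ℂ := fun x => (∫ u in a..x, g u * φ u) - g x * ∫ u in a..x, (φ u : ℂ) with hP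
  have hsplit : ∀ x y : ℝ, ∀ c : ℂ, IntervalIntegrable (fun u => g u * φ u) volume x y →
      ∫ u in x..y, (g u - c) * φ u = (∫ u in x..y, g u * φ u) - c * ∫ u in x..y, (φ u : ℂ) := by
    intro x y c hi
    rw [← intervalIntegral.integral_const_mul, ← intervalIntegral.integral_sub hi
      ((hφc.const_mul c).intervalIntegrable _ _)]
    simp only [sub_mul]
  have hPstep : ∀ x ∈ Icc a b, ∀ y ∈ Icc a b, x ≤ y →
      ‖P y - P x‖ ≤ (M + C * (y - x)) * (V y - V x) := by
    intro x hx y hy hxy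
    have e1 := intervalIntegral.integral_add_adjacent_intervals
      (hgφ a haI x hx hx.1) (hgφ x hx y hy hxy)
    have e2 := intervalIntegral.integral_add_adjacent_intervals (μ := volume)
      (hφc.intervalIntegrable a x) (hφc.intervalIntegrable x y)
    have e3 : P y - P x = (∫ u in x..y, (g u - g y) * φ u) -
        (g y - g x) * ((∫ u in a..x, φ u : ℝ) : ℂ) := by
      rw [hsplit x y _ (hgφ x hx y hy hxy), ← intervalIntegral.integral_ofReal]
      simp only [hP]
      rw [← e1, ← e2]
      ring
    have e4 : ‖∫ u in x..y, (g u - g y) * φ u‖ ≤ (C * (V y - V x)) * |y - x| := by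
      apply intervalIntegral.norm_integral_le_of_norm_le_const
      intro u hu
      rw [uIoc_of_le hxy] at hu
      have hu' : u ∈ Icc a b := ⟨hx.1.trans hu.1.le, hu.2.trans hy.2⟩
      rw [norm_mul, mul_comm, norm_sub_rev, Complex.norm_real]
      refine mul_le_mul (hC u hu') ((hgV u hu' y hy hu.2).trans ?_) (norm_nonneg _) hC0
      linarith [hVmono hx hu' hu.1.le]
    rw [abs_of_nonneg (sub_nonneg.2 hxy)] at e4
    have e5 : ‖(g y - g x) * ((∫ u in a..x, φ u : ℝ) : ℂ)‖ ≤ (V y - V x) * M := by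
      rw [norm_mul, Complex.norm_real]
      exact mul_le_mul (hgV x hx y hy hxy) (hM x hx) (norm_nonneg _)
        (sub_nonneg.2 (hVmono hx hy hxy))
    rw [e3]
    refine (norm_sub_le _ _).trans ?_
    linarith
  have hPb : ∫ u in a..b, (g u - g b) * φ u = P b - P a := by
    rw [hsplit a b _ (hgφ a haI b hbI hab)]
    simp [hP]
  have hbound : ∀ n : ℕ, ‖P b - P a‖ ≤ (M + C * (b - a) * (1 / ((n : ℝ) + 1))) * (V b - V a) := by
    intro n
    set x : ℕ → ℝ := fun i => a + i * ((b - a) / (n + 1)) with hx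
    have hn : (0 : ℝ) < n + 1 := by positivity
    have hd : 0 ≤ (b - a) / (n + 1 : ℝ) := div_nonneg (sub_nonneg.2 hab) hn.le
    have hx0 : x 0 = a := by simp [hx]
    have hxn : x (n + 1) = b := by
      simp only [hx]; push_cast; field_simp; ring
    have hxm : Monotone x := by
      intro i j hij
      simp only [hx]
      gcongr
    have hxI : ∀ i ≤ n + 1, x i ∈ Icc a b := fun i hi =>
      ⟨hx0 ▸ hxm (Nat.zero_le i), hxn ▸ hxm hi⟩
    have hstep : ∀ i, x (i + 1) - x i = (b - a) * (1 / ((n : ℝ) + 1)) := by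
      intro i
      simp only [hx]; push_cast; ring
    rw [← hxn, ← hx0, ← Finset.sum_range_sub (fun i => P (x i)),
      ← Finset.sum_range_sub (fun i => V (x i)), Finset.mul_sum]
    refine (norm_sum_le _ _).trans (Finset.sum_le_sum fun i hi => ?_)
    have hi' : i < n + 1 := Finset.mem_range.1 hi
    refine (hPstep _ (hxI i hi'.le) _ (hxI (i + 1) hi') (hxm (Nat.le_succ i))).trans ?_
    rw [hstep, hxn, hx0, mul_assoc]
  have hlim : Tendsto (fun n : ℕ => (M + C * (b - a) * (1 / ((n : ℝ) + 1))) * (V b - V a)) atTop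
      (𝓝 ((M + C * (b - a) * 0) * (V b - V a))) :=
    ((tendsto_one_div_add_atTop_nhds_zero_nat.const_mul _).const_add M).mul_const _
  rw [mul_zero, add_zero] at hlim
  rw [hPb, ← hVb]
  exact ge_of_tendsto' hlim hbound

theorem integral_exp_neg_mul_Ioi {x : ℝ} (hx : 0 < x) :
    ∫ y in Ioi (0 : ℝ), Real.exp (-(x * y)) = x⁻¹ := by
  have := integral_exp_mul_Ioi (a := -x) (by linarith) 0
  simpa [neg_mul] using this

theorem integral_sin_mul_exp_neg_mul (R y : ℝ) :
    ∫ x in (0 : ℝ)..R, Real.sin x * Real.exp (-(x * y)) =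
      (1 - Real.exp (-(R * y)) * (y * Real.sin R + Real.cos R)) * (1 + y ^ 2)⁻¹ := by
  have hy : (1 + y ^ 2) ≠ 0 := by positivity
  have hd : ∀ x ∈ uIcc 0 R, HasDerivAt
      (fun x => -(Real.exp (-(x * y)) * (y * Real.sin x + Real.cos x)) * (1 + y ^ 2)⁻¹)
      (Real.sin x * Real.exp (-(x * y))) x := by
    intro x _
    have h1 : HasDerivAt (fun x : ℝ => Real.exp (-(x * y))) (Real.exp (-(x * y)) * -(1 * y)) x :=
      (((hasDerivAt_id x).mul_const y).neg).exp
    have h2 := ((Real.hasDerivAt_sin x).const_mul y).add (Real.hasDerivAt_cos x)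
    refine ((h1.mul h2).neg.mul_const (1 + y ^ 2)⁻¹).congr_deriv ?_
    simp only [Pi.add_apply]
    field_simp
    ring
  rw [intervalIntegral.integral_eq_sub_of_hasDerivAt hd
    (Continuous.intervalIntegrable (by fun_prop) _ _)]
  simp
  ring

theorem integral_sinc_eq_integral_Ioi {R : ℝ} (hR : 0 ≤ R) :
    ∫ x in (0 : ℝ)..R, Real.sinc x = ∫ y in Ioi (0 : ℝ),
      (1 - Real.exp (-(R * y)) * (y * Real.sin R + Real.cos R)) * (1 + y ^ 2)⁻¹ := by
  simp_rw [← integral_sin_mul_exp_neg_mul]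
  rw [← intervalIntegral_integral_swap]
  · apply intervalIntegral.integral_congr_ae
    refine Eventually.of_forall fun x hx => ?_
    rw [uIoc_of_le hR] at hx
    rw [integral_const_mul, integral_exp_neg_mul_Ioi hx.1, Real.sinc_of_ne_zero hx.1.ne',
      div_eq_mul_inv]
  · rw [uIoc_of_le hR]
    rw [integrable_prod_iff (Continuous.aestronglyMeasurable (by
      simp only [Function.uncurry_def]; fun_prop))]
    have hexp : ∀ x : ℝ, 0 < x → IntegrableOn (fun y => Real.exp (-(x * y))) (Ioi 0) := by
      intro x hx
      simpa [neg_mul] using integrableOn_exp_mul_Ioi (a := -x) (by linarith) 0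
    constructor
    · filter_upwards [ae_restrict_mem measurableSet_Ioc] with x hx
      exact (hexp x hx.1).const_mul (Real.sin x)
    · have hs : IntegrableOn (fun x => |Real.sinc x|) (Ioc 0 R) :=
        (Real.continuous_sinc.abs.integrableOn_Icc).mono_set Ioc_subset_Icc_self
      refine hs.congr_fun (fun x hx => ?_) measurableSet_Ioc
      simp only [Function.uncurry_apply_pair, norm_mul, Real.norm_eq_abs, Real.abs_exp]
      rw [integral_const_mul, integral_exp_neg_mul_Ioi hx.1, Real.sinc_of_ne_zero hx.1.ne',
        abs_div, abs_of_pos hx.1, div_eq_mul_inv]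

/-- The Dirichlet integral `∫₀^∞ sin x / x dx = π / 2`, as an improper integral. -/
theorem tendsto_integral_sinc_atTop :
    Tendsto (fun R : ℝ => ∫ x in (0 : ℝ)..R, Real.sinc x) atTop (𝓝 (Real.pi / 2)) := by
  have hpi : Real.pi / 2 = ∫ y in Ioi (0 : ℝ), (1 + y ^ 2)⁻¹ := by simp
  have hbd : ∀ R y : ℝ, |y * Real.sin R + Real.cos R| ≤ 1 + |y| := by
    intro R y
    refine (abs_add_le _ _).trans ?_
    rw [abs_mul]
    nlinarith [Real.abs_sin_le_one R, Real.abs_cos_le_one R, abs_nonneg y]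
  rw [hpi]
  refine Tendsto.congr' (f₁ := fun R : ℝ => ∫ y in Ioi (0 : ℝ),
      (1 - Real.exp (-(R * y)) * (y * Real.sin R + Real.cos R)) * (1 + y ^ 2)⁻¹) ?_ ?_
  · filter_upwards [eventually_ge_atTop 0] with R hR
    exact (integral_sinc_eq_integral_Ioi hR).symm
  refine tendsto_integral_filter_of_dominated_convergence (fun y => 2 * (1 + y ^ 2)⁻¹) ?_ ?_ ?_ ?_
  · refine Eventually.of_forall fun R => Measurable.aestronglyMeasurable (by fun_prop)
  · filter_upwards [eventually_ge_atTop 1] with R hR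
    filter_upwards [ae_restrict_mem measurableSet_Ioi] with y hy
    have hy : 0 < y := hy
    rw [norm_mul, Real.norm_eq_abs, Real.norm_eq_abs, abs_of_pos (a := (1 + y ^ 2)⁻¹) (by positivity)]
    gcongr
    have h1 : |Real.exp (-(R * y)) * (y * Real.sin R + Real.cos R)| ≤ 1 := by
      rw [abs_mul, Real.abs_exp, Real.exp_neg, inv_mul_le_iff₀ (Real.exp_pos _), mul_one]
      refine (hbd R y).trans ?_
      rw [abs_of_pos hy]
      nlinarith [Real.add_one_le_exp (R * y)]
    have := abs_sub 1 (Real.exp (-(R * y)) * (y * Real.sin R + Real.cos R))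
    rw [abs_one] at this
    linarith
  · exact (integrable_inv_one_add_sq.const_mul 2).integrableOn
  · filter_upwards [ae_restrict_mem measurableSet_Ioi] with y hy
    have hy : 0 < y := hy
    have h0 : Tendsto (fun R : ℝ => Real.exp (-(R * y)) * (y * Real.sin R + Real.cos R)) atTop
        (𝓝 0) := by
      refine (Real.tendsto_exp_neg_atTop_nhds_zero.comp
        (tendsto_id.atTop_mul_const hy)).zero_mul_isBoundedUnder_le ?_
      exact isBoundedUnder_of ⟨1 + |y|, fun R => hbd R y⟩
    simpa using (h0.const_sub 1).mul_const (1 + y ^ 2)⁻¹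

theorem exists_abs_integral_sinc_le :
    ∃ M : ℝ, ∀ x : ℝ, 0 ≤ x → |∫ u in (0 : ℝ)..x, Real.sinc u| ≤ M := by
  have hc : Continuous fun x : ℝ => ∫ u in (0 : ℝ)..x, Real.sinc u :=
    intervalIntegral.continuous_primitive (fun a b => Real.continuous_sinc.intervalIntegrable a b) 0
  obtain ⟨A, hA⟩ := (tendsto_integral_sinc_atTop.abs.eventually_le_const
    (lt_add_one _)).exists_forall_of_atTop
  obtain ⟨B, hB⟩ := isCompact_Icc.exists_bound_of_continuousOn (s := Icc 0 A) hc.continuousOn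
  refine ⟨max (|Real.pi / 2| + 1) B, fun x hx => ?_⟩
  rcases le_total A x with h | h
  · exact (hA x h).trans (le_max_left _ _)
  · exact (hB x ⟨hx, h⟩).trans (le_max_right _ _)

theorem integral_mul_sinc_mul (R x : ℝ) :
    ∫ u in (0 : ℝ)..x, R * Real.sinc (R * u) = ∫ u in (0 : ℝ)..(R * x), Real.sinc u := by
  rw [intervalIntegral.integral_const_mul, intervalIntegral.mul_integral_comp_mul_left, mul_zero]

theorem continuous_mul_sinc_mul (R : ℝ) : Continuous fun u : ℝ => R * Real.sinc (R * u) :=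
  continuous_const.mul (Real.continuous_sinc.comp (continuous_const.mul continuous_id))

theorem abs_mul_sinc_mul_le (R u : ℝ) : |R * Real.sinc (R * u)| ≤ |R| := by
  rw [abs_mul]
  exact mul_le_of_le_one_right (abs_nonneg R) (Real.abs_sinc_le_one _)

theorem MeasureTheory.Integrable.mul_dirichletKernel {g : ℝ → ℂ} {μ : Measure ℝ}
    (hg : Integrable g μ) (R : ℝ) :
    Integrable (fun u => g u * ((R * Real.sinc (R * u) : ℝ) : ℂ)) μ := by
  refine hg.mul_bdd (c := |R|)
    (continuous_ofReal.comp (continuous_mul_sinc_mul R)).aestronglyMeasurable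
    (Eventually.of_forall fun u => ?_)
  rw [Complex.norm_real]
  exact abs_mul_sinc_mul_le R u

/-- The Riemann-Lebesgue lemma for the sine transform. -/
theorem tendsto_integral_mul_sin_atTop {k : ℝ → ℂ} (hk : Integrable k) :
    Tendsto (fun R : ℝ => ∫ u, k u * (Real.sin (R * u) : ℂ)) atTop (𝓝 0) := by
  have hRL := Real.tendsto_integral_exp_smul_cocompact k
  have hpos : Tendsto (fun R : ℝ => R / (2 * Real.pi)) atTop (cocompact ℝ) :=
    (tendsto_id.atTop_div_const (by positivity)).mono_right atTop_le_cocompact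
  have hneg : Tendsto (fun R : ℝ => -(R / (2 * Real.pi))) atTop (cocompact ℝ) :=
    (tendsto_neg_atTop_atBot.comp (tendsto_id.atTop_div_const (by positivity))).mono_right
      atBot_le_cocompact
  have h := ((hRL.comp hpos).sub (hRL.comp hneg)).mul_const (Complex.I / 2)
  rw [sub_zero, zero_mul] at h
  refine h.congr fun R => ?_
  have hi : ∀ w : ℝ, Integrable fun v : ℝ => Real.fourierChar (-(v * w)) • k v := by
    intro w
    refine (hk.norm.mono' ?_ (Eventually.of_forall fun v => by simp))
    have hc : Continuous fun v : ℝ => Real.fourierChar (-(v * w)) :=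
      Real.continuous_fourierChar.comp (by fun_prop)
    exact hc.aestronglyMeasurable.smul hk.aestronglyMeasurable
  simp only [Function.comp_apply]
  rw [← integral_sub (hi _) (hi _), ← integral_mul_const]
  congr 1 with u
  have hπ : (Real.pi : ℂ) ≠ 0 := by exact_mod_cast Real.pi_ne_zero
  rw [Circle.smul_def, Circle.smul_def, Real.fourierChar_apply, Real.fourierChar_apply,
    smul_eq_mul, smul_eq_mul, Complex.ofReal_sin, Complex.sin]
  have e1 : ((2 * Real.pi * -(u * (R / (2 * Real.pi))) : ℝ) : ℂ) * Complex.I =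
      -((R * u : ℝ) : ℂ) * Complex.I := by
    push_cast; field_simp
  have e2 : ((2 * Real.pi * -(u * -(R / (2 * Real.pi))) : ℝ) : ℂ) * Complex.I =
      ((R * u : ℝ) : ℂ) * Complex.I := by
    push_cast; field_simp
  rw [e1, e2]
  ring

theorem tendsto_integral_Ioi_mul_dirichletKernel_of_pos {g : ℝ → ℂ} (hg : Integrable g) {δ : ℝ}
    (hδ : 0 < δ) :
    Tendsto (fun R : ℝ => ∫ u in Ioi δ, g u * ((R * Real.sinc (R * u) : ℝ) : ℂ)) atTop (𝓝 0) := by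
  have hk : Integrable ((Ioi δ).indicator fun u => g u * ((u⁻¹ : ℝ) : ℂ)) := by
    rw [integrable_indicator_iff measurableSet_Ioi]
    refine hg.integrableOn.mul_bdd (c := δ⁻¹) (Measurable.aestronglyMeasurable (by fun_prop)) ?_
    filter_upwards [ae_restrict_mem measurableSet_Ioi] with u hu
    have hu : δ < u := hu
    rw [Complex.norm_real, Real.norm_eq_abs, abs_of_pos (inv_pos.2 (hδ.trans hu))]
    exact inv_anti₀ hδ hu.le
  refine (tendsto_integral_mul_sin_atTop hk).congr' ?_
  filter_upwards [eventually_gt_atTop 0] with R hR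
  rw [← integral_indicator measurableSet_Ioi]
  congr 1 with u
  by_cases hu : u ∈ Ioi δ
  · have hu0 : u ≠ 0 := (hδ.trans hu).ne'
    rw [indicator_of_mem hu, indicator_of_mem hu, Real.sinc_of_ne_zero (mul_ne_zero hR.ne' hu0)]
    have hR' : (R : ℂ) ≠ 0 := by exact_mod_cast hR.ne'
    have hu' : (u : ℂ) ≠ 0 := by exact_mod_cast hu0
    push_cast
    field_simp
  · rw [indicator_of_notMem hu, indicator_of_notMem hu, zero_mul]

/-- One-sided Dirichlet-Jordan theorem for the Dirichlet kernel on the half-line. -/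
theorem BoundedVariationOn.tendsto_integral_Ioi_mul_dirichletKernel {g : ℝ → ℂ} {c : ℂ}
    (hbv : BoundedVariationOn g univ) (hg : Integrable g) (hc : Tendsto g (𝓝[>] 0) (𝓝 c)) :
    Tendsto (fun R : ℝ => ∫ u in Ioi (0 : ℝ), g u * ((R * Real.sinc (R * u) : ℝ) : ℂ)) atTop
      (𝓝 (c * (Real.pi / 2 : ℝ))) := by
  obtain ⟨M, hM⟩ := exists_abs_integral_sinc_le
  have hM0 : 0 ≤ M := (abs_nonneg _).trans (hM 0 le_rfl)
  rw [Metric.tendsto_nhds]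
  intro ε hε
  obtain ⟨η, hη, hηε⟩ : ∃ η : ℝ, 0 < η ∧ η * (M + 4) = ε :=
    ⟨ε / (M + 4), by positivity, by field_simp⟩
  obtain ⟨δ, hδV, hδ⟩ : ∃ δ : ℝ, eVariationOn g (Ioc 0 δ) < ENNReal.ofReal η ∧ 0 < δ := by
    have h0 := hbv.tendsto_eVariationOn_Ioc_zero 0
    simp only [univ_inter, nhdsWithin_univ] at h0
    have h1 := (h0.mono_left (nhdsWithin_le_nhds (s := Ioi 0))).eventually_lt_const (u := ENNReal.ofReal η)
      (ENNReal.ofReal_pos.2 hη)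
    exact (h1.and self_mem_nhdsWithin : ∀ᶠ y in 𝓝[>] (0 : ℝ), _ ∧ y ∈ Ioi (0 : ℝ)).exists
  set f : ℝ → ℂ := Function.update g 0 c with hf
  have hfg : ∀ u, 0 < u → f u = g u := fun u hu => Function.update_of_ne hu.ne' _ _
  have hf0 : f 0 = c := Function.update_self _ _ _
  have hfcont : ContinuousWithinAt f (Ici 0) 0 := by
    rw [← continuousWithinAt_Ioi_iff_Ici, ContinuousWithinAt, hf0]
    exact hc.congr' (eventually_nhdsWithin_of_forall fun u hu => (hfg u hu).symm)
  have hfV : eVariationOn f (Icc 0 δ) < ENNReal.ofReal η := by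
    rw [← eVariationOn.eVariationOn_Ioc_eq_Icc_of_continuousWithinAt hfcont,
      eVariationOn.congr fun u hu => hfg u hu.1]
    exact hδV
  have hfV' : (eVariationOn f (Icc 0 δ)).toReal ≤ η := ENNReal.toReal_le_of_le_ofReal hη.le hfV.le
  have hfbv : BoundedVariationOn f (Icc 0 δ) := hfV.ne_top
  have hfi : IntervalIntegrable f volume 0 δ := by
    rw [intervalIntegrable_iff_integrableOn_Ioc_of_le hδ.le]
    exact hg.integrableOn.congr_fun (fun u hu => (hfg u hu.1).symm) measurableSet_Ioc
  have hδc : ‖g δ - c‖ ≤ η := by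
    rw [← hfg δ hδ, ← hf0, ← dist_eq_norm]
    exact (hfbv.dist_le (right_mem_Icc.2 hδ.le) (left_mem_Icc.2 hδ.le)).trans hfV'
  have hS : Tendsto (fun R : ℝ => g δ * ((∫ u in (0 : ℝ)..(R * δ), Real.sinc u : ℝ) : ℂ)) atTop
      (𝓝 (g δ * (Real.pi / 2 : ℝ))) :=
    ((continuous_ofReal.tendsto _).comp
      (tendsto_integral_sinc_atTop.comp (tendsto_id.atTop_mul_const hδ))).const_mul _
  filter_upwards [eventually_ge_atTop 0, Metric.tendsto_nhds.1 hS η hη,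
    Metric.tendsto_nhds.1 (tendsto_integral_Ioi_mul_dirichletKernel_of_pos hg hδ) η hη]
    with R hR hR1 hR2
  rw [dist_eq_norm] at hR1 hR2 ⊢
  rw [sub_zero] at hR2
  have hnear : ‖∫ u in (0 : ℝ)..δ, (f u - f δ) * ((R * Real.sinc (R * u) : ℝ) : ℂ)‖ ≤ M * η := by
    refine (norm_integral_sub_right_mul_le_eVariationOn hδ.le hfbv hfi
      (continuous_mul_sinc_mul R) fun x hx => ?_).trans (by gcongr)
    rw [integral_mul_sinc_mul]
    exact hM _ (mul_nonneg hR hx.1)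
  have hsplit : ∫ u in Ioi (0 : ℝ), g u * ((R * Real.sinc (R * u) : ℝ) : ℂ) =
      (∫ u in (0 : ℝ)..δ, (f u - f δ) * ((R * Real.sinc (R * u) : ℝ) : ℂ)) +
      g δ * ((∫ u in (0 : ℝ)..(R * δ), Real.sinc u : ℝ) : ℂ) +
      ∫ u in Ioi δ, g u * ((R * Real.sinc (R * u) : ℝ) : ℂ) := by
    have hK : Continuous fun u : ℝ => ((R * Real.sinc (R * u) : ℝ) : ℂ) :=
      continuous_ofReal.comp (continuous_mul_sinc_mul R)
    rw [← Ioc_union_Ioi_eq_Ioi hδ.le, setIntegral_union (Ioc_disjoint_Ioi le_rfl) measurableSet_Ioi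
      (hg.mul_dirichletKernel R).integrableOn (hg.mul_dirichletKernel R).integrableOn,
      ← integral_mul_sinc_mul, ← intervalIntegral.integral_ofReal,
      ← intervalIntegral.integral_const_mul, ← intervalIntegral.integral_add
        ((hfi.sub (by simp)).mul_continuousOn hK.continuousOn)
        ((hK.const_mul _).intervalIntegrable _ _), intervalIntegral.integral_of_le hδ.le]
    congr 1
    refine setIntegral_congr_fun measurableSet_Ioc fun u hu => ?_
    simp only [hfg u hu.1, hfg δ hδ]
    ring
  have hfin : ‖(g δ - c) * ((Real.pi / 2 : ℝ) : ℂ)‖ ≤ η * 2 := by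
    rw [norm_mul, Complex.norm_real, Real.norm_eq_abs, abs_of_pos (by positivity)]
    have := Real.pi_le_four
    gcongr
    linarith
  rw [hsplit]
  calc _ = ‖(∫ u in (0 : ℝ)..δ, (f u - f δ) * ((R * Real.sinc (R * u) : ℝ) : ℂ)) +
      (g δ * ((∫ u in (0 : ℝ)..(R * δ), Real.sinc u : ℝ) : ℂ) - g δ * (Real.pi / 2 : ℝ)) +
      (∫ u in Ioi δ, g u * ((R * Real.sinc (R * u) : ℝ) : ℂ)) +
      (g δ - c) * ((Real.pi / 2 : ℝ) : ℂ)‖ := by congr 1; ring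
    _ ≤ _ := norm_add₄_le
    _ < M * η + η + η + η * 2 := by linarith
    _ = ε := by rw [← hηε]; ring

theorem integral_exp_I_mul (R x : ℝ) :
    ∫ s in (-R)..R, Complex.exp (Complex.I * s * x) = 2 * ((R * Real.sinc (R * x) : ℝ) : ℂ) := by
  rcases eq_or_ne x 0 with rfl | hx
  · simp; ring
  have hx' : (x : ℂ) ≠ 0 := by exact_mod_cast hx
  have hc : Complex.I * x ≠ 0 := mul_ne_zero Complex.I_ne_zero hx'
  have h := integral_exp_mul_complex (a := -R) (b := R) hc
  have e : ∀ s : ℝ, Complex.I * s * x = Complex.I * x * s := fun s => by ring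
  simp_rw [e]
  rw [h]
  rcases eq_or_ne R 0 with rfl | hR
  · simp
  have hR' : (R : ℂ) ≠ 0 := by exact_mod_cast hR
  rw [Real.sinc_of_ne_zero (mul_ne_zero hR hx), Complex.ofReal_mul, Complex.ofReal_div,
    Complex.ofReal_sin, Complex.sin]
  push_cast
  field_simp
  rw [Complex.I_sq]
  ring_nf

/-- The truncated Fourier inversion integral as an integral against the Dirichlet kernel. -/
theorem integral_exp_mul_fourier_eq {h : ℝ → ℂ} (hint : Integrable h) (t R : ℝ) :
    (∫ s in (-R)..R, Complex.exp (Complex.I * s * t) *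
      ∫ τ : ℝ, Complex.exp (-Complex.I * s * τ) * h τ) =
    2 * ∫ u : ℝ, h (t + u) * ((R * Real.sinc (R * u) : ℝ) : ℂ) := by
  have e : ∀ s τ : ℝ, Complex.exp (Complex.I * s * t) * (Complex.exp (-Complex.I * s * τ) * h τ) =
      Complex.exp (Complex.I * s * (t - τ : ℝ)) * h τ := by
    intro s τ
    rw [← mul_assoc, ← Complex.exp_add]
    congr 2
    push_cast
    ring
  simp_rw [← integral_const_mul, e]
  rw [intervalIntegral_integral_swap]
  · simp_rw [intervalIntegral.integral_mul_const, integral_exp_I_mul]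
    rw [← integral_add_left_eq_self (fun τ => _ * h τ) t]
    congr 1 with u
    have : R * (t - (t + u)) = -(R * u) := by ring
    rw [this, Real.sinc_neg]
    ring
  · have hp : Integrable (Function.uncurry fun (_ : ℝ) (τ : ℝ) => h τ)
        ((volume.restrict (uIoc (-R) R)).prod volume) := by
      have : IsFiniteMeasure (volume.restrict (uIoc (-R) R)) := ⟨by simp [uIoc]⟩
      exact hint.comp_snd _
    refine hp.bdd_mul (c := 1) (f := fun p : ℝ × ℝ => Complex.exp (Complex.I * p.1 * (t - p.2 : ℝ)))
      (Continuous.aestronglyMeasurable (by fun_prop)) (Eventually.of_forall fun p => ?_)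
    have : Complex.I * p.1 * (t - p.2 : ℝ) = ((p.1 * (t - p.2) : ℝ) : ℂ) * Complex.I := by
      push_cast; ring
    rw [this, Complex.norm_exp_ofReal_mul_I]

/-- Pointwise Fourier inversion for an integrable function of bounded
variation: the symmetric (principal-value) inversion integral converges to the
average of the one-sided limits at `t`. Here `a = h(t⁻)` and `b = h(t⁺)`. -/
theorem fourier_inversion_bounded_variation_average
    (h : ℝ → ℂ) (t : ℝ) (a b : ℂ)
    (hint : Integrable h)
    (hbv : BoundedVariationOn h Set.univ)
    (hleft : Tendsto h (nhdsWithin t (Iio t)) (nhds a))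
    (hright : Tendsto h (nhdsWithin t (Ioi t)) (nhds b)) :
    Tendsto
      (fun R : ℝ =>
        (1 / (2 * Real.pi) : ℂ) *
          ∫ s in (-R)..R, Complex.exp (Complex.I * s * t) *
            ∫ τ : ℝ, Complex.exp (-Complex.I * s * τ) * h τ)
      atTop (nhds ((b + a) / 2)) := by
  have hπ : (Real.pi : ℂ) ≠ 0 := by exact_mod_cast Real.pi_ne_zero
  have hr : Tendsto (fun u : ℝ => t + u) (𝓝[>] 0) (𝓝[>] t) := by
    refine tendsto_nhdsWithin_iff.2 ⟨?_, eventually_nhdsWithin_of_forall fun u hu => ?_⟩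
    · exact Continuous.tendsto' (by fun_prop) _ _ (add_zero t) |>.mono_left nhdsWithin_le_nhds
    · exact lt_add_of_pos_right t hu
  have hl : Tendsto (fun u : ℝ => t - u) (𝓝[>] 0) (𝓝[<] t) := by
    refine tendsto_nhdsWithin_iff.2 ⟨?_, eventually_nhdsWithin_of_forall fun u hu => ?_⟩
    · exact Continuous.tendsto' (by fun_prop) _ _ (sub_zero t) |>.mono_left nhdsWithin_le_nhds
    · exact sub_lt_self t hu
  have hbvr : BoundedVariationOn (h ∘ fun u => t + u) univ :=
    ne_top_of_le_ne_top hbv (eVariationOn.comp_le_of_monotoneOn h _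
      (fun x _ y _ hxy => by simpa using hxy) (mapsTo_univ _ _))
  have hbvl : BoundedVariationOn (h ∘ fun u => t - u) univ :=
    ne_top_of_le_ne_top hbv (eVariationOn.comp_le_of_antitoneOn h _
      (fun x _ y _ hxy => sub_le_sub_left hxy t) (mapsTo_univ _ _))
  have hir : Integrable fun u => h (t + u) := hint.comp_add_left t
  have hil : Integrable fun u => h (t - u) := hint.comp_sub_left t
  have key := ((hbvr.tendsto_integral_Ioi_mul_dirichletKernel hir (hright.comp hr)).add
    (hbvl.tendsto_integral_Ioi_mul_dirichletKernel hil (hleft.comp hl))).const_mul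
    (1 / Real.pi : ℂ)
  have hlim : (1 / Real.pi : ℂ) * (b * (Real.pi / 2 : ℝ) + a * (Real.pi / 2 : ℝ)) =
      (b + a) / 2 := by
    push_cast
    field_simp
  rw [hlim] at key
  refine key.congr fun R => ?_
  have hneg : ∫ u in Iic (0 : ℝ), h (t + u) * ((R * Real.sinc (R * u) : ℝ) : ℂ) =
      ∫ u in Ioi (0 : ℝ), h (t - u) * ((R * Real.sinc (R * u) : ℝ) : ℂ) := by
    rw [← neg_zero, ← integral_comp_neg_Ioi, neg_zero]
    simp only [mul_neg, Real.sinc_neg, sub_eq_add_neg]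
  have hsplit := intervalIntegral.integral_Iic_add_Ioi (b := (0 : ℝ))
    (hir.mul_dirichletKernel R).integrableOn (hir.mul_dirichletKernel R).integrableOn
  rw [integral_exp_mul_fourier_eq hint, ← hsplit, hneg]
  have hcomm : ∀ X Y : ℂ, 1 / Real.pi * (X + Y) = 1 / (2 * Real.pi) * (2 * (Y + X)) := by
    intro X Y
    field_simp
    ring
  exact hcomm _ _
end
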